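/- arXiv:1203.6768 — 2 statements merged into one kernel-verified Lean document; each statement's English description precedes it below -/
import Mathlib

section
/- For λ∈ba(𝒜) the following are equivalent: (i) λ∈ba₀(𝒜); (ii) |λ|∈ba₀(𝒜); (iii) there exists η>0 such that A∈𝒜 and |λ|(A)>0 imply |λ|(A)>η; (iv) there exists c>0 such that A∈𝒜 and |λ(A)|>0 imply |λ(A)|>c. -/
open Set Filter Topology

namespace FA

/-- An algebra of subsets of `Ω`. -/
structure SetAlg (Ω : Type*) where
  sets : Set (Set Ω)
  empty_mem : ∅ ∈ sets
  compl_mem : ∀ ⦃A⦄, A ∈ sets → Aᶜ ∈ sets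
  union_mem : ∀ ⦃A B⦄, A ∈ sets → B ∈ sets → A ∪ B ∈ sets

/-- A bounded, finitely additive real-valued set function on the algebra `𝒜`,
i.e. an element of `ba(𝒜)`. -/
structure BAMeasure {Ω : Type*} (𝒜 : SetAlg Ω) where
  toFun : Set Ω → ℝ
  map_empty : toFun ∅ = 0
  additive : ∀ ⦃A B : Set Ω⦄, A ∈ 𝒜.sets → B ∈ 𝒜.sets → Disjoint A B →
      toFun (A ∪ B) = toFun A + toFun B
  bounded : ∃ M : ℝ, ∀ A ∈ 𝒜.sets, |toFun A| ≤ M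

variable {Ω : Type*} {𝒜 : SetAlg Ω}

/-- Total variation `|λ|(A) = λ⁺(A) + λ⁻(A)`. -/
noncomputable def var (lam : BAMeasure 𝒜) (A : Set Ω) : ℝ :=
  sSup {x | ∃ B ∈ 𝒜.sets, B ⊆ A ∧ x = lam.toFun B} +
  sSup {x | ∃ B ∈ 𝒜.sets, B ⊆ A ∧ x = -lam.toFun B}

/-- The outer measure `|λ|*(B) = inf {|λ|(A) : A ∈ 𝒜, B ⊆ A}`. -/
noncomputable def outer (lam : BAMeasure 𝒜) (B : Set Ω) : ℝ :=
  sInf {x | ∃ A ∈ 𝒜.sets, B ⊆ A ∧ x = var lam A}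

/-- `𝒜`-simple functions. -/
def IsSimple (𝒜 : SetAlg Ω) (f : Ω → ℝ) : Prop :=
  (Set.range f).Finite ∧ ∀ r : ℝ, f ⁻¹' {r} ∈ 𝒜.sets

/-- `λ`-convergence: `(f n)` converges to `g` in `λ`-measure. -/
def LConv (lam : BAMeasure 𝒜) (f : ℕ → Ω → ℝ) (g : Ω → ℝ) : Prop :=
  ∀ c > (0:ℝ), Tendsto (fun n => outer lam {ω | c < |f n ω - g ω|}) atTop (𝓝 0)

/-- `λ`-Cauchy sequences. -/
def LCauchy (lam : BAMeasure 𝒜) (f : ℕ → Ω → ℝ) : Prop :=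
  ∀ c > (0:ℝ), ∀ ε > (0:ℝ), ∃ N : ℕ, ∀ p q : ℕ,
    outer lam {ω | c < |f (N + p) ω - f (N + q) ω|} < ε

/-- `L⁰(λ)`: `λ`-limits of sequences of `𝒜`-simple functions. -/
def L0 (lam : BAMeasure 𝒜) : Set (Ω → ℝ) :=
  {f | ∃ s : ℕ → Ω → ℝ, (∀ n, IsSimple 𝒜 (s n)) ∧ LConv lam s f}

/-- The metric of `L⁰(λ)`: `d(f,g) = inf {c + |λ|*(|f-g| ≥ c) : c > 0}`. -/
noncomputable def dL0 (lam : BAMeasure 𝒜) (f g : Ω → ℝ) : ℝ :=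
  sInf {x | ∃ c > (0:ℝ), x = c + outer lam {ω | c ≤ |f ω - g ω|}}

/-- A set `K` is bounded in `L⁰(λ)` if `lim_{c→∞} sup_{f∈K} |λ|*(|f|>c) = 0`. -/
def BddL0 (lam : BAMeasure 𝒜) (K : Set (Ω → ℝ)) : Prop :=
  ∀ ε > (0:ℝ), ∃ c₀ : ℝ, ∀ c ≥ c₀, ∀ f ∈ K, outer lam {ω | c < |f ω|} < ε

/-- The nonnegative elements of `L⁰(λ)`. -/
def L0pos (lam : BAMeasure 𝒜) : Set (Ω → ℝ) := {f ∈ L0 lam | ∀ ω, 0 ≤ f ω}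

/-- The elementary integral of a simple function with respect to a set function. -/
noncomputable def simpleIntegral (m : Set Ω → ℝ) (f : Ω → ℝ) : ℝ :=
  ∑ᶠ r : ℝ, r * m (f ⁻¹' {r})

/-- Dunford–Schwartz integrability: there is a sequence of simple functions converging to `f`
in `λ`-measure which is Cauchy in mean. -/
def MemL1 (lam : BAMeasure 𝒜) (f : Ω → ℝ) : Prop :=
  ∃ s : ℕ → Ω → ℝ, (∀ n, IsSimple 𝒜 (s n)) ∧ LConv lam s f ∧
    ∀ ε > (0:ℝ), ∃ N : ℕ, ∀ m ≥ N, ∀ n ≥ N,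
      simpleIntegral (var lam) (fun ω => |s m ω - s n ω|) < ε

/-- `L¹(λ)`. -/
def L1 (lam : BAMeasure 𝒜) : Set (Ω → ℝ) := {f | MemL1 lam f}

open scoped Classical in
/-- The Dunford–Schwartz integral `∫ f dλ`. -/
noncomputable def integral (lam : BAMeasure 𝒜) (f : Ω → ℝ) : ℝ :=
  if h : MemL1 lam f then
    limUnder atTop (fun n => simpleIntegral lam.toFun (h.choose n))
  else 0

open scoped Classical in
/-- The `L¹(λ)` seminorm `∫ |f| d|λ|`. -/
noncomputable def l1Norm (lam : BAMeasure 𝒜) (f : Ω → ℝ) : ℝ :=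
  if h : MemL1 lam f then
    limUnder atTop (fun n => simpleIntegral (var lam) (fun ω => |h.choose n ω|))
  else 0

/-- A set is bounded in `L¹(μ)` if the integrals `∫|f| d|μ|` are uniformly bounded. -/
def BddL1 (mu : BAMeasure 𝒜) (K : Set (Ω → ℝ)) : Prop :=
  ∃ M : ℝ, ∀ f ∈ K, l1Norm mu f ≤ M

/-- Finitely additive probability measures. -/
def IsFAProb (mu : BAMeasure 𝒜) : Prop :=
  mu.toFun Set.univ = 1 ∧ ∀ A ∈ 𝒜.sets, 0 ≤ mu.toFun A

/-- `μ ∈ 𝔓_*(λ)`: a finitely additive probability with `|μ| ≤ c |λ|` and the same null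
sets as `λ`. -/
def PStar (lam mu : BAMeasure 𝒜) : Prop :=
  IsFAProb mu ∧ (∃ c : ℝ, 0 ≤ c ∧ ∀ A ∈ 𝒜.sets, var mu A ≤ c * var lam A) ∧
  ∀ A ∈ 𝒜.sets, (mu.toFun A = 0 ↔ var lam A = 0)

/-- `μ ∈ 𝔓_*(λ; K)`. -/
def PStarWith (lam : BAMeasure 𝒜) (K : Set (Ω → ℝ)) (mu : BAMeasure 𝒜) : Prop :=
  PStar lam mu ∧ K ⊆ L1 mu ∧ BddL1 mu K

/-- `f` is a `λ`-a.s. lower bound of `K`. -/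
def ASLowerBound (lam : BAMeasure 𝒜) (f : Ω → ℝ) (K : Set (Ω → ℝ)) : Prop :=
  ∀ c > (0:ℝ), ∀ k ∈ K, outer lam {ω | k ω < f ω - c} = 0

/-- Absolute continuity `μ ≪ λ` for bounded finitely additive set functions. -/
def AbsCont (mu lam : BAMeasure 𝒜) : Prop :=
  ∀ ε > (0:ℝ), ∃ δ > (0:ℝ), ∀ A ∈ 𝒜.sets, var lam A < δ → var mu A < ε

/-- `λ ∈ ba₀(𝒜)`: the range of `λ` is finite. -/
def FiniteRange (lam : BAMeasure 𝒜) : Prop := (lam.toFun '' 𝒜.sets).Finite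

/-- `μ ∈ ba₀(λ)`. -/
def BA0rel (lam mu : BAMeasure 𝒜) : Prop := FiniteRange mu ∧ AbsCont mu lam

/-- Strong continuity: arbitrarily fine finite partitions. -/
def StronglyContinuous (lam : BAMeasure 𝒜) : Prop :=
  ∀ ε > (0:ℝ), ∃ (N : ℕ) (A : Fin N → Set Ω), (∀ n, A n ∈ 𝒜.sets) ∧
    Pairwise (Function.onFun Disjoint A) ∧ (⋃ n, A n) = Set.univ ∧
    ∀ n, var lam (A n) < ε

/-- Orthogonality of bounded finitely additive set functions. -/
def Orthogonal (mu nu : BAMeasure 𝒜) : Prop :=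
  ∀ ε > (0:ℝ), ∃ A ∈ 𝒜.sets, var mu A < ε ∧ var nu Aᶜ < ε

/-- Strong discontinuity: orthogonal to every strongly continuous element of `ba(𝒜)`. -/
def StronglyDiscontinuous (mu : BAMeasure 𝒜) : Prop :=
  ∀ nu : BAMeasure 𝒜, StronglyContinuous nu → Orthogonal mu nu

/-- Countable additivity of `λ` on the algebra `𝒜`. -/
def CountablyAdditive (lam : BAMeasure 𝒜) : Prop :=
  ∀ A : ℕ → Set Ω, (∀ n, A n ∈ 𝒜.sets) → Pairwise (Function.onFun Disjoint A) →
    (⋃ n, A n) ∈ 𝒜.sets → HasSum (fun n => lam.toFun (A n)) (lam.toFun (⋃ n, A n))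

/-- `𝒜` is a σ-algebra. -/
def IsSigmaAlg (𝒜 : SetAlg Ω) : Prop :=
  ∀ A : ℕ → Set Ω, (∀ n, A n ∈ 𝒜.sets) → (⋃ n, A n) ∈ 𝒜.sets

/-- Linearity of a functional on `L⁰(λ)`. -/
def LinearOnL0 (lam : BAMeasure 𝒜) (φ : (Ω → ℝ) → ℝ) : Prop :=
  (∀ f ∈ L0 lam, ∀ g ∈ L0 lam, φ (f + g) = φ f + φ g) ∧
  (∀ a : ℝ, ∀ f ∈ L0 lam, φ (a • f) = a * φ f)

/-- Continuity of a functional on `L⁰(λ)` with respect to the metric `d`. -/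
def ContinuousOnL0 (lam : BAMeasure 𝒜) (φ : (Ω → ℝ) → ℝ) : Prop :=
  ∀ f ∈ L0 lam, ∀ ε > (0:ℝ), ∃ δ > (0:ℝ), ∀ g ∈ L0 lam, dL0 lam g f < δ → |φ g - φ f| < ε


/-!
The total variation `|λ|(A)` is the diameter of the set of values that `λ` takes on the members of
`𝒜` inside `A`. If `λ` has finite range, there are only finitely many such sets of values, hence
finitely many diameters. The set of values for `A` is the Minkowski sum of those for `B` and
`A \ B`, so `|λ|` is additive. If the positive values of `|λ|` exceed `η`, then splitting a set into
two parts that are not `|λ|`-null lowers `|λ|` by at least `η` on each part; after finitely many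
splittings only sets are left on which `λ` takes at most two values, and the range of `λ` is a sum
of finitely many finite sets.
-/

open scoped Pointwise

lemma exists_gt_forall_mem_lt_of_finite {α : Type*} [LinearOrder α] [DenselyOrdered α]
    [NoMaxOrder α] {S : Set α} (hS : S.Finite) (a : α) :
    ∃ c > a, ∀ x ∈ S, a < x → c < x := by
  rcases (S ∩ Ioi a).eq_empty_or_nonempty with hempty | hne
  · obtain ⟨c, hc⟩ := exists_gt a
    exact ⟨c, hc, fun x hx hax => (hempty.subset ⟨hx, hax⟩).elim⟩
  · obtain ⟨m, ⟨-, ham⟩, hm⟩ := exists_min_image _ id (hS.inter_of_left (Ioi a)) hne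
    obtain ⟨c, hac, hcm⟩ := exists_between ham
    exact ⟨c, hac, fun x hx hax => hcm.trans_le (hm x ⟨hx, hax⟩)⟩

lemma diam_add {S T : Set ℝ} (hS : Bornology.IsBounded S) (hT : Bornology.IsBounded T)
    (hS₀ : S.Nonempty) (hT₀ : T.Nonempty) :
    Metric.diam (S + T) = Metric.diam S + Metric.diam T := by
  rw [Real.diam_eq (hS.add hT), Real.diam_eq hS, Real.diam_eq hT,
    csSup_add hS₀ hS.bddAbove hT₀ hT.bddAbove, csInf_add hS₀ hS.bddBelow hT₀ hT.bddBelow]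
  ring

lemma SetAlg.isSetAlgebra (𝒜 : SetAlg Ω) : MeasureTheory.IsSetAlgebra 𝒜.sets where
  empty_mem := 𝒜.empty_mem
  compl_mem := 𝒜.compl_mem
  union_mem := 𝒜.union_mem

namespace BAMeasure

variable (lam : BAMeasure 𝒜)

/-- The set of values `λ(B)` at the members `B` of `𝒜` contained in `A`. The set `A` itself need not
belong to `𝒜`. -/
def rangeOn (A : Set Ω) : Set ℝ := lam.toFun '' (𝒜.sets ∩ 𝒫 A)

lemma rangeOn_univ : lam.rangeOn univ = lam.toFun '' 𝒜.sets := by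
  rw [rangeOn, powerset_univ, inter_univ]

lemma rangeOn_subset (A : Set Ω) : lam.rangeOn A ⊆ lam.toFun '' 𝒜.sets :=
  image_mono inter_subset_left

lemma zero_mem_rangeOn (A : Set Ω) : 0 ∈ lam.rangeOn A :=
  ⟨∅, ⟨𝒜.empty_mem, empty_subset A⟩, lam.map_empty⟩

lemma isBounded_rangeOn (A : Set Ω) : Bornology.IsBounded (lam.rangeOn A) := by
  obtain ⟨M, hM⟩ := lam.bounded
  refine isBounded_iff_forall_norm_le.2 ⟨M, ?_⟩
  rintro _ ⟨B, ⟨hB, -⟩, rfl⟩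
  exact hM B hB

variable {lam} {A B : Set Ω}

lemma toFun_inter_add_toFun_sdiff (hA : A ∈ 𝒜.sets) (hB : B ∈ 𝒜.sets) :
    lam.toFun (A ∩ B) + lam.toFun (A \ B) = lam.toFun A := by
  rw [← lam.additive (𝒜.isSetAlgebra.inter_mem hA hB) (𝒜.isSetAlgebra.sdiff_mem hA hB)
    disjoint_sdiff_inter.symm, inter_union_sdiff]

lemma rangeOn_add_rangeOn_sdiff (hB : B ∈ 𝒜.sets) (hBA : B ⊆ A) :
    lam.rangeOn B + lam.rangeOn (A \ B) = lam.rangeOn A := by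
  refine Subset.antisymm ?_ ?_
  · rintro _ ⟨_, ⟨C, ⟨hC, hCB⟩, rfl⟩, _, ⟨D, ⟨hD, hDB⟩, rfl⟩, rfl⟩
    exact ⟨C ∪ D, ⟨𝒜.union_mem hC hD, union_subset (hCB.trans hBA) (hDB.trans sdiff_subset)⟩,
      lam.additive hC hD (disjoint_sdiff_right.mono hCB hDB)⟩
  · rintro _ ⟨C, ⟨hC, hCA⟩, rfl⟩
    rw [← toFun_inter_add_toFun_sdiff hC hB]
    exact add_mem_add
      ⟨C ∩ B, ⟨𝒜.isSetAlgebra.inter_mem hC hB, inter_subset_right⟩, rfl⟩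
      ⟨C \ B, ⟨𝒜.isSetAlgebra.sdiff_mem hC hB, sdiff_subset_sdiff_left hCA⟩, rfl⟩

variable (lam) in
lemma var_eq_diam_rangeOn (A : Set Ω) : var lam A = Metric.diam (lam.rangeOn A) := by
  have hpos : {x | ∃ B ∈ 𝒜.sets, B ⊆ A ∧ x = lam.toFun B} = lam.rangeOn A := by
    ext x
    simp [rangeOn, and_assoc, eq_comm]
  have hneg : {x | ∃ B ∈ 𝒜.sets, B ⊆ A ∧ x = -lam.toFun B} = -lam.rangeOn A := by
    ext x
    simp [rangeOn, and_assoc, eq_comm, neg_eq_iff_eq_neg]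
  rw [var, hpos, hneg, Real.sSup_neg, Real.diam_eq (lam.isBounded_rangeOn A), sub_eq_add_neg]

lemma abs_toFun_le_var (hB : B ∈ 𝒜.sets) (hBA : B ⊆ A) : |lam.toFun B| ≤ var lam A := by
  rw [var_eq_diam_rangeOn, ← Real.dist_0_eq_abs]
  exact Metric.dist_le_diam_of_mem (lam.isBounded_rangeOn A) ⟨B, ⟨hB, hBA⟩, rfl⟩
    (lam.zero_mem_rangeOn A)

lemma toFun_eq_zero_of_var_nonpos (hB : B ∈ 𝒜.sets) (hBA : B ⊆ A) (h : var lam A ≤ 0) :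
    lam.toFun B = 0 :=
  abs_nonpos_iff.1 ((abs_toFun_le_var hB hBA).trans h)

lemma exists_toFun_ne_zero_of_var_pos (h : 0 < var lam A) :
    ∃ B ∈ 𝒜.sets, B ⊆ A ∧ lam.toFun B ≠ 0 := by
  by_contra! hzero
  have hsub : (lam.rangeOn A).Subsingleton := by
    rintro _ ⟨B, ⟨hB, hBA⟩, rfl⟩ _ ⟨C, ⟨hC, hCA⟩, rfl⟩
    rw [hzero B hB hBA, hzero C hC hCA]
  exact h.ne' (lam.var_eq_diam_rangeOn A ▸ Metric.diam_subsingleton hsub)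

lemma var_add_var_sdiff (hB : B ∈ 𝒜.sets) (hBA : B ⊆ A) :
    var lam B + var lam (A \ B) = var lam A := by
  simp only [var_eq_diam_rangeOn]
  rw [← rangeOn_add_rangeOn_sdiff hB hBA,
    diam_add (lam.isBounded_rangeOn _) (lam.isBounded_rangeOn _)
      ⟨0, lam.zero_mem_rangeOn _⟩ ⟨0, lam.zero_mem_rangeOn _⟩]

lemma rangeOn_subset_pair (hA : A ∈ 𝒜.sets)
    (hatom : ∀ B ∈ 𝒜.sets, B ⊆ A → 0 < var lam B → var lam (A \ B) ≤ 0) :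
    lam.rangeOn A ⊆ {0, lam.toFun A} := by
  rintro _ ⟨B, ⟨hB, hBA⟩, rfl⟩
  rcases le_or_gt (var lam B) 0 with hnull | hpos
  · exact Or.inl (toFun_eq_zero_of_var_nonpos hB Subset.rfl hnull)
  · have hrest : lam.toFun (A \ B) = 0 :=
      toFun_eq_zero_of_var_nonpos (𝒜.isSetAlgebra.sdiff_mem hA hB) Subset.rfl
        (hatom B hB hBA hpos)
    right
    rw [mem_singleton_iff, ← toFun_inter_add_toFun_sdiff hA hB, hrest, add_zero,
      inter_eq_self_of_subset_right hBA]

lemma finite_rangeOn_of_var_le {η : ℝ} (hgap : ∀ B ∈ 𝒜.sets, 0 < var lam B → η ≤ var lam B)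
    (n : ℕ) (hA : A ∈ 𝒜.sets) (hn : var lam A ≤ n * η) : (lam.rangeOn A).Finite := by
  induction n generalizing A with
  | zero =>
    refine (finite_singleton 0).subset ?_
    rintro _ ⟨B, ⟨hB, hBA⟩, rfl⟩
    exact toFun_eq_zero_of_var_nonpos hB hBA (by simpa using hn)
  | succ n ih =>
    by_cases hatom : ∀ B ∈ 𝒜.sets, B ⊆ A → 0 < var lam B → var lam (A \ B) ≤ 0
    · exact (toFinite _).subset (rangeOn_subset_pair hA hatom)
    · push Not at hatom
      obtain ⟨B, hB, hBA, hBpos, hrestpos⟩ := hatom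
      have hrest := 𝒜.isSetAlgebra.sdiff_mem hA hB
      have hsplit := var_add_var_sdiff (lam := lam) hB hBA
      have hBη := hgap B hB hBpos
      have hrestη := hgap _ hrest hrestpos
      push_cast at hn
      rw [← rangeOn_add_rangeOn_sdiff hB hBA]
      exact (ih hB (by linarith)).add (ih hrest (by linarith))

lemma finiteRange_of_var_gap {η : ℝ} (hη : 0 < η)
    (hgap : ∀ A ∈ 𝒜.sets, 0 < var lam A → η ≤ var lam A) : FiniteRange lam := by
  obtain ⟨n, hn⟩ := exists_nat_ge (var lam univ / η)
  rw [FiniteRange, ← rangeOn_univ]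
  exact finite_rangeOn_of_var_le hgap n 𝒜.isSetAlgebra.univ_mem ((div_le_iff₀ hη).1 hn)

lemma finite_range_var (h : FiniteRange lam) : (range (var lam)).Finite := by
  refine (h.finite_subsets.image Metric.diam).subset ?_
  rintro _ ⟨A, rfl⟩
  exact ⟨lam.rangeOn A, lam.rangeOn_subset A, (lam.var_eq_diam_rangeOn A).symm⟩

lemma lt_var_of_abs_toFun_gap {c : ℝ} (hgap : ∀ B ∈ 𝒜.sets, 0 < |lam.toFun B| → c < |lam.toFun B|)
    (h : 0 < var lam A) : c < var lam A := by
  obtain ⟨B, hB, hBA, hne⟩ := exists_toFun_ne_zero_of_var_pos h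
  exact (hgap B hB (abs_pos.2 hne)).trans_le (abs_toFun_le_var hB hBA)

end BAMeasure

/-- Lemma 1: for `λ ∈ ba(𝒜)` the following are equivalent: (i) `λ ∈ ba₀(𝒜)`;
(ii) `|λ| ∈ ba₀(𝒜)`; (iii) there is `η > 0` with `|λ|(A) > 0 → |λ|(A) > η` for `A ∈ 𝒜`;
(iv) there is `c > 0` with `|λ(A)| > 0 → |λ(A)| > c` for `A ∈ 𝒜`. -/
theorem stmt_0 {Ω : Type*} {𝒜 : SetAlg Ω} (lam : BAMeasure 𝒜) :
    List.TFAE [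
      FiniteRange lam,
      ((fun A => var lam A) '' 𝒜.sets).Finite,
      ∃ η > (0:ℝ), ∀ A ∈ 𝒜.sets, 0 < var lam A → η < var lam A,
      ∃ c > (0:ℝ), ∀ A ∈ 𝒜.sets, 0 < |lam.toFun A| → c < |lam.toFun A|] := by
  tfae_have 1 → 2 := fun h =>
    (BAMeasure.finite_range_var h).subset (image_subset_range _ _)
  tfae_have 2 → 3 := fun h => by
    simpa only [forall_mem_image] using exists_gt_forall_mem_lt_of_finite h 0
  tfae_have 3 → 1 := fun ⟨η, hη, hgap⟩ =>
    BAMeasure.finiteRange_of_var_gap hη fun A hA hpos => (hgap A hA hpos).le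
  tfae_have 1 → 4 := fun h => by
    simpa only [forall_mem_image] using exists_gt_forall_mem_lt_of_finite (h.image abs) 0
  tfae_have 4 → 3 := fun ⟨c, hc, hgap⟩ =>
    ⟨c, hc, fun _ _ => BAMeasure.lt_var_of_abs_toFun_gap hgap⟩
  tfae_finish

end FA
end

section
/- If 𝒜 is a σ-algebra, λ is countably additive, and φ is a continuous linear functional on L⁰(λ), then either φ=0 or λ has an atom, i.e. a set A∈𝒜 with |λ|(A)>0 such that every B∈𝒜 with B⊆A satisfies |λ|(B)=0 or |λ|(A∖B)=0. -/
open Set Filter Topology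

namespace FA

variable {Ω : Type*} {𝒜 : SetAlg Ω}

/-!
Put `ν(A) = φ(f · 1_A)`, an additive function on `𝒜`. A multiple of `f · 1_A` differs from `0` only
on `A`, so its distance to `0` is at most `|λ|(A)`, whatever the multiple; continuity of `φ` hence
forces `ν(A) = 0` as soon as `|λ|(A)` is small. By countable additivity the sets charged by `ν` are
then stable under decreasing countable intersections, so among them there is one, `B`, whose
variation `|λ|(B)` cannot be decreased further. If `C ⊆ B`, then `ν` charges `C` or `B \ C`, and by
minimality the other one is null: `B` is an atom.
-/

open MeasureTheory

section Minimization

/-- The sequential minimization principle of Brezis and Browder. -/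
theorem exists_le_forall_le_eq_of_antitone_bddBelow {α : Type*} [Preorder α] {f : α → ℝ}
    (hf : Monotone f) (hbdd : BddBelow (range f))
    (hseq : ∀ u : ℕ → α, Antitone u → BddBelow (range u)) (a : α) :
    ∃ b ≤ a, ∀ c ≤ b, f c = f b := by
  have almost_min (n : ℕ) (x : α) : ∃ y ≤ x, ∀ z ≤ x, f y ≤ f z + 1 / (n + 1) := by
    obtain ⟨_, ⟨y, hyx, rfl⟩, hy⟩ := exists_lt_of_csInf_lt (nonempty_Iic.image f)
      (lt_add_of_pos_right (sInf (f '' Iic x)) (Nat.one_div_pos_of_nat (n := n)))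
    have hx_bdd : BddBelow (f '' Iic x) := hbdd.mono (image_subset_range _ _)
    exact ⟨y, hyx, fun z hz ↦ hy.le.trans (by grw [csInf_le hx_bdd ⟨z, hz, rfl⟩])⟩
  choose next next_le le_next using almost_min
  let u : ℕ → α := fun n ↦ Nat.rec a next n
  obtain ⟨b, hb⟩ := hseq u (antitone_nat_of_succ_le fun n ↦ next_le n (u n))
  have b_le (n : ℕ) : b ≤ u n := hb ⟨n, rfl⟩
  refine ⟨b, b_le 0, fun c hc ↦ (hf hc).antisymm (le_of_forall_pos_le_add fun ε hε ↦ ?_)⟩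
  obtain ⟨n, hn⟩ := exists_nat_one_div_lt hε
  calc f b ≤ f (u (n + 1)) := hf (b_le (n + 1))
    _ ≤ f c + 1 / (n + 1) := le_next n (u n) c (hc.trans (b_le n))
    _ ≤ f c + ε := by gcongr

end Minimization

section Atoms

variable {G : Type*} [AddZeroClass G] [MeasurableSpace Ω]

/-- `A` is an atom of the measure `μ`: a measurable set of positive measure that cannot be split
into two measurable parts of positive measure. -/
def IsAtomOf (μ : Measure Ω) (A : Set Ω) : Prop :=
  MeasurableSet A ∧ 0 < μ A ∧ ∀ B, MeasurableSet B → B ⊆ A → μ B = 0 ∨ μ (A \ B) = 0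

variable {μ : Measure Ω} [IsFiniteMeasure μ] {ν : Set Ω → G} {δ : ENNReal}

theorem ne_zero_iInter_of_antitone
    (hν : ∀ A B, MeasurableSet A → MeasurableSet B → Disjoint A B → ν (A ∪ B) = ν A + ν B)
    (hδ : 0 < δ) (hsmall : ∀ A, MeasurableSet A → μ A < δ → ν A = 0) {D : ℕ → Set Ω}
    (hD : ∀ n, MeasurableSet (D n)) (hanti : Antitone D) (hne : ∀ n, ν (D n) ≠ 0) :
    ν (⋂ n, D n) ≠ 0 := by
  have hI : MeasurableSet (⋂ n, D n) := .iInter hD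
  have hlim : Tendsto (fun n ↦ μ (D n \ ⋂ k, D k)) atTop (𝓝 0) := by
    have h := tendsto_measure_iInter_atTop (μ := μ) (fun n ↦ ((hD n).diff hI).nullMeasurableSet)
      (fun i j hij ↦ sdiff_subset_sdiff_left (hanti hij)) ⟨0, measure_ne_top _ _⟩
    have hempty : ⋂ n, (D n \ ⋂ k, D k) = ∅ := eq_empty_of_forall_notMem fun ω hω ↦
      (mem_iInter.1 hω 0).2 (mem_iInter.2 fun n ↦ (mem_iInter.1 hω n).1)
    rwa [hempty, measure_empty] at h
  obtain ⟨n, hn⟩ := (hlim.eventually_lt_const hδ).exists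
  have hsplit := hν _ _ hI ((hD n).diff hI) disjoint_sdiff_right
  rw [union_sdiff_cancel (iInter_subset D n), hsmall _ ((hD n).diff hI) hn, add_zero] at hsplit
  exact hsplit ▸ hne n

theorem exists_measure_minimal_of_ne_zero
    (hν : ∀ A B, MeasurableSet A → MeasurableSet B → Disjoint A B → ν (A ∪ B) = ν A + ν B)
    (hδ : 0 < δ) (hsmall : ∀ A, MeasurableSet A → μ A < δ → ν A = 0) {A : Set Ω}
    (hA : MeasurableSet A) (hne : ν A ≠ 0) :
    ∃ B ⊆ A, MeasurableSet B ∧ ν B ≠ 0 ∧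
      ∀ C ⊆ B, MeasurableSet C → ν C ≠ 0 → μ (B \ C) = 0 := by
  let Charged := {C : Set Ω // MeasurableSet C ∧ ν C ≠ 0}
  obtain ⟨⟨B, hB, hνB⟩, hBA, hmin⟩ := exists_le_forall_le_eq_of_antitone_bddBelow
    (f := fun C : Charged ↦ μ.real C.1) (fun C C' h ↦ measureReal_mono h)
    ⟨0, forall_mem_range.2 fun _ ↦ measureReal_nonneg⟩
    (fun u hu ↦ ⟨⟨⋂ n, (u n).1, .iInter fun n ↦ (u n).2.1,
      ne_zero_iInter_of_antitone hν hδ hsmall (fun n ↦ (u n).2.1) hu fun n ↦ (u n).2.2⟩,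
      forall_mem_range.2 fun n ↦ iInter_subset (fun n ↦ (u n).1) n⟩)
    ⟨A, hA, hne⟩
  refine ⟨B, hBA, hB, hνB, fun C hCB hC hνC ↦ ?_⟩
  have hCB_eq : μ.real C = μ.real B := hmin ⟨C, hC, hνC⟩ hCB
  rw [← measureReal_eq_zero_iff, measureReal_sdiff hCB hC, hCB_eq, sub_self]

theorem exists_isAtomOf_of_ne_zero
    (hν : ∀ A B, MeasurableSet A → MeasurableSet B → Disjoint A B → ν (A ∪ B) = ν A + ν B)
    (hδ : 0 < δ) (hsmall : ∀ A, MeasurableSet A → μ A < δ → ν A = 0) {A : Set Ω}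
    (hA : MeasurableSet A) (hne : ν A ≠ 0) :
    ∃ B ⊆ A, IsAtomOf μ B := by
  obtain ⟨B, hBA, hB, hνB, hmin⟩ := exists_measure_minimal_of_ne_zero hν hδ hsmall hA hne
  have hμB : δ ≤ μ B := not_lt.1 fun h ↦ hνB (hsmall B hB h)
  refine ⟨B, hBA, hB, hδ.trans_le hμB, fun C hC hCB ↦ ?_⟩
  by_cases hνC : ν C = 0
  · have hsplit := hν C (B \ C) hC (hB.diff hC) disjoint_sdiff_right
    rw [union_sdiff_cancel hCB, hνC, zero_add] at hsplit
    have h := hmin (B \ C) sdiff_subset (hB.diff hC) (hsplit ▸ hνB)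
    exact .inl (by rwa [sdiff_sdiff_cancel_left hCB] at h)
  · exact .inr (hmin C hCB hC hνC)

end Atoms

section TotalVariation

theorem isGreatest_posPart_real [MeasurableSpace Ω] (s : SignedMeasure Ω) {A : Set Ω}
    (hA : MeasurableSet A) :
    IsGreatest {x | ∃ B, MeasurableSet B ∧ B ⊆ A ∧ x = s B}
      (s.toJordanDecomposition.posPart.real A) := by
  constructor
  · obtain ⟨P, hP, hPpos, -, hpos, -⟩ := s.toJordanDecomposition_spec
    exact ⟨P ∩ A, hP.inter hA, inter_subset_right,
      by rw [hpos, s.toMeasureOfZeroLE_real_apply hPpos hP hA]⟩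
  · rintro _ ⟨B, hB, hBA, rfl⟩
    calc s B = s.toJordanDecomposition.posPart.real B - s.toJordanDecomposition.negPart.real B :=
          s.apply_eq_posPart_real_sub_negPart_real hB
      _ ≤ s.toJordanDecomposition.posPart.real B := sub_le_self _ measureReal_nonneg
      _ ≤ s.toJordanDecomposition.posPart.real A := measureReal_mono hBA

theorem isGreatest_negPart_real [MeasurableSpace Ω] (s : SignedMeasure Ω) {A : Set Ω}
    (hA : MeasurableSet A) :
    IsGreatest {x | ∃ B, MeasurableSet B ∧ B ⊆ A ∧ x = -s B}
      (s.toJordanDecomposition.negPart.real A) := by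
  simpa [SignedMeasure.toJordanDecomposition_neg] using isGreatest_posPart_real (-s) hA

/-- The σ-algebra `𝒜` as a `MeasurableSpace`, through which Mathlib's measure theory applies. -/
@[reducible]
def IsSigmaAlg.measurableSpace (hσ : IsSigmaAlg 𝒜) : MeasurableSpace Ω where
  MeasurableSet' A := A ∈ 𝒜.sets
  measurableSet_empty := 𝒜.empty_mem
  measurableSet_compl _ hA := 𝒜.compl_mem hA
  measurableSet_iUnion A hA := hσ A hA

variable {lam : BAMeasure 𝒜} [MeasurableSpace Ω]

open scoped Classical in
/-- A countably additive `λ` as a signed measure. Its value is set to `0` off the σ-algebra, as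
`VectorMeasure` requires, whereas `λ.toFun` is arbitrary there. -/
noncomputable def CountablyAdditive.signedMeasure (hca : CountablyAdditive lam)
    (h𝒜 : ∀ A, MeasurableSet A ↔ A ∈ 𝒜.sets) : SignedMeasure Ω where
  measureOf' A := if MeasurableSet A then lam.toFun A else 0
  empty' := by simp [lam.map_empty]
  not_measurable' _ hA := if_neg hA
  m_iUnion' A hA hdisj := by
    simpa only [hA, MeasurableSet.iUnion hA, if_true] using
      hca A (fun n ↦ (h𝒜 _).1 (hA n)) hdisj ((h𝒜 _).1 (.iUnion hA))

theorem CountablyAdditive.signedMeasure_apply (hca : CountablyAdditive lam)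
    (h𝒜 : ∀ A, MeasurableSet A ↔ A ∈ 𝒜.sets) {A : Set Ω} (hA : MeasurableSet A) :
    hca.signedMeasure h𝒜 A = lam.toFun A :=
  if_pos hA

theorem CountablyAdditive.var_eq_totalVariation_real (hca : CountablyAdditive lam)
    (h𝒜 : ∀ A, MeasurableSet A ↔ A ∈ 𝒜.sets) {A : Set Ω} (hA : MeasurableSet A) :
    var lam A = (hca.signedMeasure h𝒜).totalVariation.real A := by
  rw [SignedMeasure.totalVariation, measureReal_add_apply,
    ← (isGreatest_posPart_real _ hA).csSup_eq, ← (isGreatest_negPart_real _ hA).csSup_eq]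
  simp only [var, ← h𝒜]
  congr! 6 with x B x B <;>
    exact and_congr_right fun hB ↦ by rw [hca.signedMeasure_apply h𝒜 hB]

end TotalVariation

section OuterMeasure

variable (lam : BAMeasure 𝒜)

theorem var_nonneg (A : Set Ω) : 0 ≤ var lam A :=
  add_nonneg
    (Real.sSup_nonneg' ⟨_, ⟨∅, 𝒜.empty_mem, empty_subset A, rfl⟩, lam.map_empty.ge⟩)
    (Real.sSup_nonneg' ⟨_, ⟨∅, 𝒜.empty_mem, empty_subset A, rfl⟩, by simp [lam.map_empty]⟩)

theorem var_empty : var lam ∅ = 0 := by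
  simp [var, subset_empty_iff, 𝒜.empty_mem, lam.map_empty]

theorem outer_nonneg (A : Set Ω) : 0 ≤ outer lam A :=
  Real.sInf_nonneg (by rintro _ ⟨B, -, -, rfl⟩; exact var_nonneg lam B)

theorem outer_le_var {A B : Set Ω} (hB : B ∈ 𝒜.sets) (hAB : A ⊆ B) : outer lam A ≤ var lam B :=
  csInf_le ⟨0, by rintro _ ⟨C, -, -, rfl⟩; exact var_nonneg lam C⟩ ⟨B, hB, hAB, rfl⟩

theorem outer_mono {A B : Set Ω} (hAB : A ⊆ B) : outer lam A ≤ outer lam B := by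
  have univ_mem : univ ∈ 𝒜.sets := compl_empty ▸ 𝒜.compl_mem 𝒜.empty_mem
  refine le_csInf ⟨_, univ, univ_mem, subset_univ B, rfl⟩ ?_
  rintro _ ⟨C, hC, hBC, rfl⟩
  exact outer_le_var lam hC (hAB.trans hBC)

theorem outer_empty : outer lam ∅ = 0 :=
  ((outer_le_var lam 𝒜.empty_mem subset_rfl).trans_eq (var_empty lam)).antisymm
    (outer_nonneg lam ∅)

variable {lam} in
theorem dL0_le_var_of_eqOn_compl {f g : Ω → ℝ} {A : Set Ω} (hA : A ∈ 𝒜.sets)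
    (hfg : EqOn f g Aᶜ) : dL0 lam f g ≤ var lam A := by
  refine le_of_forall_pos_le_add fun c hc ↦ ?_
  have hsub : {ω | c ≤ |f ω - g ω|} ⊆ A := fun ω hω ↦ by
    by_contra hωA
    exact hc.not_ge (by simpa [hfg hωA] using hω)
  calc dL0 lam f g ≤ c + outer lam {ω | c ≤ |f ω - g ω|} :=
        csInf_le ⟨0, by rintro _ ⟨b, hb, rfl⟩; exact add_nonneg hb.le (outer_nonneg lam _)⟩
          ⟨c, hc, rfl⟩
    _ ≤ c + var lam A := by grw [outer_le_var lam hA hsub]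
    _ = var lam A + c := add_comm _ _

end OuterMeasure

section SimpleFunctions

theorem SetAlg.isSetAlgebra_s3 (𝒜 : SetAlg Ω) : IsSetAlgebra 𝒜.sets :=
  ⟨𝒜.empty_mem, 𝒜.compl_mem, 𝒜.union_mem⟩

theorem isSimple_const (a : ℝ) : IsSimple 𝒜 fun _ ↦ a := by
  classical
  refine ⟨finite_range_const, fun r ↦ ?_⟩
  rw [preimage_const]
  split_ifs
  exacts [𝒜.isSetAlgebra_s3.univ_mem, 𝒜.empty_mem]

theorem IsSimple.comp {f : Ω → ℝ} (hf : IsSimple 𝒜 f) (g : ℝ → ℝ) : IsSimple 𝒜 (g ∘ f) := by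
  refine ⟨range_comp g f ▸ hf.1.image g, fun r ↦ ?_⟩
  have hfin : (range f ∩ g ⁻¹' {r}).Finite := hf.1.inter_of_left _
  have hpre : (g ∘ f) ⁻¹' {r} = ⋃ y ∈ hfin.toFinset, f ⁻¹' {y} := by
    ext ω
    simp
  rw [hpre]
  exact 𝒜.isSetAlgebra_s3.biUnion_mem _ fun y _ ↦ hf.2 y

theorem IsSimple.indicator {f : Ω → ℝ} (hf : IsSimple 𝒜 f) {A : Set Ω} (hA : A ∈ 𝒜.sets) :
    IsSimple 𝒜 (A.indicator f) := by
  refine ⟨(hf.1.insert 0).subset ?_, fun r ↦ ?_⟩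
  · rintro _ ⟨ω, rfl⟩
    by_cases hω : ω ∈ A <;> simp [hω]
  · rw [indicator_preimage]
    exact 𝒜.union_mem (𝒜.isSetAlgebra_s3.inter_mem (hf.2 r) hA)
      (𝒜.isSetAlgebra_s3.sdiff_mem ((isSimple_const 0).2 r) hA)

end SimpleFunctions

section L0

variable {lam : BAMeasure 𝒜} {f : Ω → ℝ} {A : Set Ω}

theorem LConv.of_abs_sub_le {s t : ℕ → Ω → ℝ} {f g : Ω → ℝ} (hs : LConv lam s f)
    (hle : ∀ n ω, |t n ω - g ω| ≤ |s n ω - f ω|) : LConv lam t g := fun c hc ↦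
  squeeze_zero (fun _ ↦ outer_nonneg lam _)
    (fun n ↦ outer_mono lam fun ω (hω : c < _) ↦ hω.trans_le (hle n ω)) (hs c hc)

theorem IsSimple.mem_L0 (hf : IsSimple 𝒜 f) : f ∈ L0 lam :=
  ⟨fun _ ↦ f, fun _ ↦ hf, fun c hc ↦ by simp [hc.not_gt, outer_empty]⟩

theorem indicator_mem_L0 (hf : f ∈ L0 lam) (hA : A ∈ 𝒜.sets) : A.indicator f ∈ L0 lam := by
  obtain ⟨s, hs, hconv⟩ := hf
  refine ⟨fun n ↦ A.indicator (s n), fun n ↦ (hs n).indicator hA,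
    hconv.of_abs_sub_le fun n ω ↦ ?_⟩
  by_cases hω : ω ∈ A <;> simp [hω]

theorem smul_mem_L0 (hf : f ∈ L0 lam) (a : ℝ) : a • f ∈ L0 lam := by
  obtain ⟨s, hs, hconv⟩ := hf
  refine ⟨fun n ↦ a • s n, fun n ↦ (hs n).comp (a * ·), fun c hc ↦ ?_⟩
  refine squeeze_zero (fun _ ↦ outer_nonneg lam _) (fun n ↦ outer_mono lam fun ω hω ↦ ?_)
    (hconv (c / (|a| + 1)) (by positivity))
  rw [mem_ofPred_eq, div_lt_iff₀ (by positivity)]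
  calc c < |(a • s n) ω - (a • f) ω| := hω
    _ = |s n ω - f ω| * |a| := by
      rw [Pi.smul_apply, Pi.smul_apply, ← smul_sub, smul_eq_mul, abs_mul, mul_comm]
    _ ≤ |s n ω - f ω| * (|a| + 1) := by gcongr; exact (lt_add_one _).le

variable {φ : (Ω → ℝ) → ℝ}

theorem LinearOnL0.map_indicator_union (hlin : LinearOnL0 lam φ) (hf : f ∈ L0 lam) {B : Set Ω}
    (hA : A ∈ 𝒜.sets) (hB : B ∈ 𝒜.sets) (hdisj : Disjoint A B) :
    φ ((A ∪ B).indicator f) = φ (A.indicator f) + φ (B.indicator f) := by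
  rw [indicator_union_of_disjoint hdisj]
  exact hlin.1 _ (indicator_mem_L0 hf hA) _ (indicator_mem_L0 hf hB)

theorem LinearOnL0.exists_map_indicator_eq_zero_of_var_lt (hlin : LinearOnL0 lam φ)
    (hcont : ContinuousOnL0 lam φ) :
    ∃ δ > 0, ∀ A ∈ 𝒜.sets, var lam A < δ → ∀ f ∈ L0 lam, φ (A.indicator f) = 0 := by
  have zero_mem : (0 : Ω → ℝ) ∈ L0 lam := (isSimple_const 0).mem_L0
  have map_zero : φ 0 = 0 := by simpa using hlin.2 0 0 zero_mem
  obtain ⟨δ, hδ, hφ⟩ := hcont 0 zero_mem 1 one_pos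
  refine ⟨δ, hδ, fun A hA hAδ f hf ↦ ?_⟩
  have hg : A.indicator f ∈ L0 lam := indicator_mem_L0 hf hA
  have bounded (t : ℝ) : |t * φ (A.indicator f)| < 1 := by
    have hdist : dL0 lam (t • A.indicator f) 0 ≤ var lam A :=
      dL0_le_var_of_eqOn_compl hA fun ω hω ↦ by simp [indicator_of_notMem hω]
    simpa [map_zero, hlin.2 t _ hg] using hφ _ (smul_mem_L0 hg t) (hdist.trans_lt hAδ)
  by_contra hne
  simpa [hne] using bounded (φ (A.indicator f))⁻¹

end L0

/-- Corollary 6 (Mukherjee and Summers): if `𝒜` is a σ-algebra, `λ` is countably additive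
and `φ` is a continuous linear functional on `L⁰(λ)`, then either `φ = 0` or `λ` has an
atom. -/
theorem stmt_3 {Ω : Type*} {𝒜 : SetAlg Ω} (hσ : IsSigmaAlg 𝒜)
    (lam : BAMeasure 𝒜) (hca : CountablyAdditive lam)
    (φ : (Ω → ℝ) → ℝ) (hlin : LinearOnL0 lam φ) (hcont : ContinuousOnL0 lam φ) :
    (∀ f ∈ L0 lam, φ f = 0) ∨
    ∃ A ∈ 𝒜.sets, 0 < var lam A ∧ ∀ B ∈ 𝒜.sets, B ⊆ A →
      var lam B = 0 ∨ var lam (A \ B) = 0 := by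
  let := hσ.measurableSpace
  have h𝒜 : ∀ A, MeasurableSet A ↔ A ∈ 𝒜.sets := fun _ ↦ Iff.rfl
  have var_eq {A : Set Ω} (hA : A ∈ 𝒜.sets) := hca.var_eq_totalVariation_real h𝒜 hA
  obtain ⟨δ, hδ, hsmall⟩ := hlin.exists_map_indicator_eq_zero_of_var_lt hcont
  refine or_iff_not_imp_left.2 fun hφ ↦ ?_
  obtain ⟨f, hf, hφf⟩ : ∃ f ∈ L0 lam, φ f ≠ 0 := by simpa using hφ
  obtain ⟨A, -, hA, hpos, hatom⟩ := exists_isAtomOf_of_ne_zero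
    (μ := (hca.signedMeasure h𝒜).totalVariation) (ν := fun B ↦ φ (B.indicator f)) (A := univ)
    (fun B C hB hC hdisj ↦ hlin.map_indicator_union hf hB hC hdisj) (ENNReal.ofReal_pos.2 hδ)
    (fun B hB hBδ ↦ hsmall B hB (var_eq hB ▸ ENNReal.toReal_lt_of_lt_ofReal hBδ) f hf)
    .univ (by simpa using hφf)
  refine ⟨A, hA, var_eq hA ▸ ENNReal.toReal_pos hpos.ne' (measure_ne_top _ A), fun B hB hBA ↦ ?_⟩
  rw [var_eq hB, var_eq (MeasurableSet.diff hA hB), measureReal_eq_zero_iff,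
    measureReal_eq_zero_iff]
  exact hatom B hB hBA

end FA
end
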